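/- Deduction theorem for SKSg: for all formulas P and Q, there exists a derivation in SKSg with premise P and conclusion Q if and only if there exists a proof in SKSg of the formula [¬P, Q]. -/

import Mathlib

/-!
Derivations are closed under contexts and under composition.  Hence a derivation from `P`
to `Q`, placed inside `[¬P, { }]` below the identity `t ⟶ [P, ¬P] = [¬P, P]`, proves `[¬P, Q]`.
Conversely, a proof of `[¬P, Q]`, placed inside `(P, { })`, gives
`P = (P, t) ⟶ (P, [¬P, Q]) ⟶ [(P, ¬P), Q] ⟶ [f, Q] = Q`
by one switch and one cut.  The closure properties are `Deriv.disR`, `Deriv.conR` and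
`Deriv.comp`.
-/

/-!
Deep-inference systems SKSg, SKS and KS for classical propositional logic
(the calculus of structures).  Formulas are built from atoms `a`, their
negations `ā`, and the units `t` (true) and `f` (false) by disjunction
`[P,Q]` (`dis`) and conjunction `(P,Q)` (`con`), and are considered modulo
the congruence `Equiv` generated by associativity, commutativity and the
unit laws.  Rules apply inside an arbitrary one-hole context and modulo the
equivalence.
-/

namespace DI

/-- Formulas of the calculus of structures for classical logic:
units `t`, `f`; atoms `pos a`; negated atoms `neg a`; disjunction `dis`
(written `[P,Q]`); conjunction `con` (written `(P,Q)`). -/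
inductive F : Type where
  | tt  : F
  | ff  : F
  | pos : ℕ → F
  | neg : ℕ → F
  | dis : F → F → F
  | con : F → F → F
deriving DecidableEq

/-- Negation, pushed to the atoms by the De Morgan laws:
`¬t = f`, `¬f = t`, `¬[P,Q] = (¬P,¬Q)`, `¬(P,Q) = [¬P,¬Q]`, `¬¬P = P`. -/
def F.negF : F → F
  | .tt => .ff
  | .ff => .tt
  | .pos a => .neg a
  | .neg a => .pos a
  | .dis P Q => .con P.negF Q.negF
  | .con P Q => .dis P.negF Q.negF

/-- Atoms are the propositional symbols and their negations. -/
def F.isAtom : F → Prop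
  | .pos _ => True
  | .neg _ => True
  | _ => False

/-- Syntactic equivalence of formulas: the smallest congruence generated by
associativity and commutativity of both connectives and the unit laws
`[t,t]=t`, `(f,f)=f`, `[f,P]=P`, `(t,P)=P`. -/
inductive Equiv : F → F → Prop where
  | refl (P : F) : Equiv P P
  | symm {P Q : F} : Equiv P Q → Equiv Q P
  | trans {P Q R : F} : Equiv P Q → Equiv Q R → Equiv P R
  | disComm (P Q : F) : Equiv (.dis P Q) (.dis Q P)
  | conComm (P Q : F) : Equiv (.con P Q) (.con Q P)
  | disAssoc (P Q R : F) : Equiv (.dis (.dis P Q) R) (.dis P (.dis Q R))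
  | conAssoc (P Q R : F) : Equiv (.con (.con P Q) R) (.con P (.con Q R))
  | ttDis : Equiv (.dis .tt .tt) .tt
  | ffCon : Equiv (.con .ff .ff) .ff
  | ffDis (P : F) : Equiv (.dis .ff P) P
  | ttCon (P : F) : Equiv (.con .tt P) P
  | disCongr {P P' Q Q' : F} :
      Equiv P P' → Equiv Q Q' → Equiv (.dis P Q) (.dis P' Q')
  | conCongr {P P' Q Q' : F} :
      Equiv P P' → Equiv Q Q' → Equiv (.con P Q) (.con P' Q')

/-- One-hole contexts. -/
inductive Ctx : Type where
  | hole : Ctx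
  | disL : Ctx → F → Ctx
  | disR : F → Ctx → Ctx
  | conL : Ctx → F → Ctx
  | conR : F → Ctx → Ctx

/-- Plugging a formula into the hole of a context. -/
def Ctx.fill : Ctx → F → F
  | .hole, P => P
  | .disL C Q, P => .dis (C.fill P) Q
  | .disR Q C, P => .dis Q (C.fill P)
  | .conL C Q, P => .con (C.fill P) Q
  | .conR Q C, P => .con Q (C.fill P)

/-- Names of the inference rules of SKSg and SKS. -/
inductive Rule : Type where
  | iDown | iUp | wDown | wUp | cDown | cUp | s | m
  | aiDown | aiUp | awDown | awUp | acDown | acUp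
deriving DecidableEq

/-- The rules, read at the root of a formula (premise on the left,
conclusion on the right). -/
inductive RootStep : Rule → F → F → Prop where
  | iDown (P : F) : RootStep .iDown .tt (.dis P P.negF)
  | iUp (P : F) : RootStep .iUp (.con P P.negF) .ff
  | wDown (P : F) : RootStep .wDown .ff P
  | wUp (P : F) : RootStep .wUp P .tt
  | cDown (P : F) : RootStep .cDown (.dis P P) P
  | cUp (P : F) : RootStep .cUp P (.con P P)
  | s (P Q R : F) : RootStep .s (.con P (.dis Q R)) (.dis (.con P Q) R)
  | m (P Q R S : F) :
      RootStep .m (.dis (.con P Q) (.con R S)) (.con (.dis P R) (.dis Q S))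
  | aiDown (A : F) (h : A.isAtom) : RootStep .aiDown .tt (.dis A A.negF)
  | aiUp (A : F) (h : A.isAtom) : RootStep .aiUp (.con A A.negF) .ff
  | awDown (A : F) (h : A.isAtom) : RootStep .awDown .ff A
  | awUp (A : F) (h : A.isAtom) : RootStep .awUp A .tt
  | acDown (A : F) (h : A.isAtom) : RootStep .acDown (.dis A A) A
  | acUp (A : F) (h : A.isAtom) : RootStep .acUp A (.con A A)

/-- One inference step using a rule from the set `Rs`, applied inside an
arbitrary context and modulo the equivalence. -/
def Step (Rs : Set Rule) (P Q : F) : Prop :=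
  ∃ r ∈ Rs, ∃ (C : Ctx) (P' Q' : F),
    RootStep r P' Q' ∧ Equiv P (C.fill P') ∧ Equiv (C.fill Q') Q

/-- Derivations over an arbitrary step relation: a finite sequence of rule
instances from the premise to the conclusion (modulo the equivalence). -/
inductive Deriv (St : F → F → Prop) : F → F → Prop where
  | eqv {P Q : F} : Equiv P Q → Deriv St P Q
  | step {P Q R : F} : St P Q → Deriv St Q R → Deriv St P R

/-- The system SKSg: general (non-atomic) rules plus switch. -/
def SKSg : Set Rule := {.iDown, .iUp, .wDown, .wUp, .cDown, .cUp, .s}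

/-- The system SKS: atomic rules plus switch and medial. -/
def SKS : Set Rule := {.aiDown, .aiUp, .awDown, .awUp, .acDown, .acUp, .s, .m}

/-- The system KS: the down fragment of SKS. -/
def KS : Set Rule := {.aiDown, .awDown, .acDown, .s, .m}

/-- A proof of `Q` in the system `Rs` is a derivation from the unit `t` to `Q`. -/
def Proof (Rs : Set Rule) (Q : F) : Prop := Deriv (Step Rs) .tt Q

/-- A rule `r` is derivable from a set `Rs` of rules if every instance of `r`
(with premise `P` and conclusion `Q`) can be replaced by a derivation from
`P` to `Q` using only rules of `Rs`. -/
def RuleDerivable (r : Rule) (Rs : Set Rule) : Prop :=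
  ∀ P Q : F, Step {r} P Q → Deriv (Step Rs) P Q

end DI

namespace DI

theorem Step.of_equiv {Rs : Set Rule} {P P' Q : F} (e : Equiv P P') (h : Step Rs P' Q) :
    Step Rs P Q := by
  obtain ⟨r, hr, C, A, B, hs, h₁, h₂⟩ := h
  exact ⟨r, hr, C, A, B, hs, e.trans h₁, h₂⟩

/-- Derivations compose.  When the first one is a bare equivalence, it is absorbed into the
first step of the second. -/
theorem Deriv.comp {Rs : Set Rule} {P Q R : F} (h₁ : Deriv (Step Rs) P Q)
    (h₂ : Deriv (Step Rs) Q R) : Deriv (Step Rs) P R := by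
  induction h₁ with
  | eqv e =>
    cases h₂ with
    | eqv e' => exact .eqv (e.trans e')
    | step s d => exact .step (Step.of_equiv e s) d
  | step s _ ih => exact .step s (ih h₂)

theorem Deriv.disR {Rs : Set Rule} (A : F) {P Q : F} (h : Deriv (Step Rs) P Q) :
    Deriv (Step Rs) (.dis A P) (.dis A Q) := by
  induction h with
  | eqv e => exact .eqv (.disCongr (.refl A) e)
  | step s _ ih =>
    obtain ⟨r, hr, C, X, Y, hs, h₁, h₂⟩ := s
    exact .step ⟨r, hr, .disR A C, X, Y, hs, .disCongr (.refl A) h₁,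
      .disCongr (.refl A) h₂⟩ ih

theorem Deriv.conR {Rs : Set Rule} (A : F) {P Q : F} (h : Deriv (Step Rs) P Q) :
    Deriv (Step Rs) (.con A P) (.con A Q) := by
  induction h with
  | eqv e => exact .eqv (.conCongr (.refl A) e)
  | step s _ ih =>
    obtain ⟨r, hr, C, X, Y, hs, h₁, h₂⟩ := s
    exact .step ⟨r, hr, .conR A C, X, Y, hs, .conCongr (.refl A) h₁,
      .conCongr (.refl A) h₂⟩ ih

/-- Deduction theorem for SKSg.
For all formulas `P` and `Q`, there is a derivation in SKSg with premise `P`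
and conclusion `Q` if and only if there is a proof in SKSg of `[¬P, Q]`. -/
theorem deduction_SKSg (P Q : F) :
    Deriv (Step SKSg) P Q ↔ Proof SKSg (.dis P.negF Q) := by
  constructor
  · intro h
    exact .step ⟨.iDown, by simp [SKSg], .hole, _, _, .iDown P, .refl _, .disComm _ _⟩
      (h.disR P.negF)
  · intro h
    have hP : Deriv (Step SKSg) P (.con P .tt) :=
      .eqv ((Equiv.ttCon P).symm.trans (.conComm _ _))
    refine hP.comp ((Deriv.conR P h).comp ?_)
    exact .step ⟨.s, by simp [SKSg], .hole, _, _, .s P P.negF Q, .refl _, .refl _⟩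
      (.step ⟨.iUp, by simp [SKSg], .disL .hole Q, _, _, .iUp P, .refl _, .ffDis Q⟩
        (.eqv (.refl Q)))

end DI
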